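/- Let H be a real Hilbert space, let a : H × H → ℝ be a bilinear form that is coercive with constant K > 0, i.e. a(u,u) ≥ K‖u‖² for all u ∈ H, let Φ, Ψ : H → H be maps such that Φ is monotone, i.e. ⟨Φ(u) − Φ(v), u − v⟩ ≥ 0 for all u, v ∈ H, and suppose there is ε ≥ 0 with ‖Ψ(z) − Φ(z)‖ ≤ ε for all z ∈ H. Let f ∈ H, and suppose y ∈ H satisfies a(y, v) + ⟨Φ(y), v⟩ = ⟨f, v⟩ for all v ∈ H, and w ∈ H satisfies a(w, v) + ⟨Ψ(w), v⟩ = ⟨f, v⟩ for all v ∈ H. Then ‖w − y‖ ≤ ε/K. -/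

import Mathlib

open scoped RealInnerProductSpace

/-- Abstract Hilbert-space estimate behind the `H¹`-convergence of the states:
if `a` is a coercive bilinear form, `Φ` is monotone, and `Ψ` is uniformly
`ε`-close to `Φ`, then the solutions of the two semilinear equations with the
same right-hand side `f` satisfy `‖w − y‖ ≤ ε/K`. -/
theorem perturbed_monotone_solution_estimate
    {H : Type*} [NormedAddCommGroup H] [InnerProductSpace ℝ H]
    (a : H →ₗ[ℝ] H →ₗ[ℝ] ℝ) (K : ℝ) (hK : 0 < K)
    (hcoer : ∀ u : H, K * ‖u‖ ^ 2 ≤ a u u)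
    (Φ Ψ : H → H)
    (hmono : ∀ u v : H, 0 ≤ ⟪Φ u - Φ v, u - v⟫)
    (ε : ℝ) (hε : 0 ≤ ε) (hclose : ∀ z : H, ‖Ψ z - Φ z‖ ≤ ε)
    (f y w : H)
    (hy : ∀ v : H, a y v + ⟪Φ y, v⟫ = ⟪f, v⟫)
    (hw : ∀ v : H, a w v + ⟪Ψ w, v⟫ = ⟪f, v⟫) :
    ‖w - y‖ ≤ ε / K := by
  have hcoercive := hcoer (w - y)
  have hmonotone := hmono w y
  have hdual : -⟪Ψ w - Φ w, w - y⟫ ≤ ε * ‖w - y‖ :=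
    (neg_le_abs _).trans <| (abs_real_inner_le_norm _ _).trans <|
      mul_le_mul_of_nonneg_right (hclose w) (norm_nonneg _)
  have hsub : a (w - y) (w - y) = a w (w - y) - a y (w - y) := by
    rw [map_sub a, LinearMap.sub_apply]
  rw [inner_sub_left] at hmonotone hdual
  have henergy : K * ‖w - y‖ ^ 2 ≤ ε * ‖w - y‖ := by
    linarith [hy (w - y), hw (w - y)]
  rw [le_div_iff₀ hK]
  rcases (norm_nonneg (w - y)).eq_or_lt with hzero | hpos
  · rwa [← hzero, zero_mul]
  · exact le_of_mul_le_mul_right (by linarith) hpos
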